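/- Let φ be an LTLf formula built from tt, ff, atoms, ¬, ∧, X, and U, and let ρ be a finite trace. Then for every position x with 0 ≤ x < |ρ|: ρ, x ⊨ φ (LTLf satisfaction) if and only if ρ^R, |ρ| − 1 − x ⊨ φ^R (PLTLf satisfaction). -/

import Mathlib

/-!
The proof is by structural induction on the formula, for all positions at once. The map
`x ↦ ρ.length - 1 - x` is an order-reversing involution of the positions of `ρ` under which
the letters of `ρ` and `ρ.reverse` agree. It therefore exchanges successor with predecessor,
matching `X` with `Y`, and it sends a witness `y ≥ x` of `U` with guard interval `[x, y)` to a
witness of `S` whose guard interval is the mirror image of `[x, y)`. Truncated subtraction is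
harmless since every position involved is smaller than `ρ.length`.
-/

/-- Syntax of PLTLf (past LTLf) formulas over atomic propositions `P`. -/
inductive PLTLf (P : Type) : Type where
  | tt : PLTLf P
  | ff : PLTLf P
  | atom : P → PLTLf P
  | not : PLTLf P → PLTLf P
  | and : PLTLf P → PLTLf P → PLTLf P
  | yesterday : PLTLf P → PLTLf P
  | since : PLTLf P → PLTLf P → PLTLf P

/-- Satisfaction `ρ, x ⊨ ψ` of a PLTLf formula on a finite trace
`ρ : List (Set P)` at position `x`. -/
def PLTLf.Sat {P : Type} (ρ : List (Set P)) : PLTLf P → ℕ → Prop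
  | .tt, _ => True
  | .ff, _ => False
  | .atom p, x => p ∈ ρ.getD x ∅
  | .not ψ, x => ¬ PLTLf.Sat ρ ψ x
  | .and ψ₁ ψ₂, x => PLTLf.Sat ρ ψ₁ x ∧ PLTLf.Sat ρ ψ₂ x
  | .yesterday ψ, x => 1 ≤ x ∧ PLTLf.Sat ρ ψ (x - 1)
  | .since ψ₁ ψ₂, x => ∃ y, y ≤ x ∧ PLTLf.Sat ρ ψ₂ y ∧
      ∀ z, y < z → z ≤ x → PLTLf.Sat ρ ψ₁ z

/-- Syntax of LTLf formulas built from `tt`, `ff`, atoms, `¬`, `∧`, `X`, `U`. -/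
inductive LTLfB (P : Type) : Type where
  | tt : LTLfB P
  | ff : LTLfB P
  | atom : P → LTLfB P
  | not : LTLfB P → LTLfB P
  | and : LTLfB P → LTLfB P → LTLfB P
  | next : LTLfB P → LTLfB P
  | until_ : LTLfB P → LTLfB P → LTLfB P

/-- Satisfaction `ρ, x ⊨ φ` of an LTLf formula on a finite trace. -/
def LTLfB.Sat {P : Type} (ρ : List (Set P)) : LTLfB P → ℕ → Prop
  | .tt, _ => True
  | .ff, _ => False
  | .atom p, x => p ∈ ρ.getD x ∅
  | .not φ, x => ¬ LTLfB.Sat ρ φ x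
  | .and φ₁ φ₂, x => LTLfB.Sat ρ φ₁ x ∧ LTLfB.Sat ρ φ₂ x
  | .next φ, x => x + 1 < ρ.length ∧ LTLfB.Sat ρ φ (x + 1)
  | .until_ φ₁ φ₂, x => ∃ y, x ≤ y ∧ y < ρ.length ∧ LTLfB.Sat ρ φ₂ y ∧
      ∀ z, x ≤ z → z < y → LTLfB.Sat ρ φ₁ z

/-- The reversal `φ^R` of an LTLf formula: replace `X` by `Y` and `U` by `S`,
leaving the Boolean structure unchanged. -/
def LTLfB.rev {P : Type} : LTLfB P → PLTLf P
  | .tt => .tt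
  | .ff => .ff
  | .atom p => .atom p
  | .not φ => .not φ.rev
  | .and φ₁ φ₂ => .and φ₁.rev φ₂.rev
  | .next φ => .yesterday φ.rev
  | .until_ φ₁ φ₂ => .since φ₁.rev φ₂.rev

/-- Pointwise reversal: `ρ, x ⊨ φ` iff `ρ^R, |ρ| − 1 − x ⊨ φ^R`. -/
theorem reversal_pointwise {P : Type} (φ : LTLfB P) (ρ : List (Set P))
    (x : ℕ) (hx : x < ρ.length) :
    LTLfB.Sat ρ φ x ↔ PLTLf.Sat ρ.reverse φ.rev (ρ.length - 1 - x) := by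
  induction φ generalizing x with
  | tt => simp [LTLfB.Sat, LTLfB.rev, PLTLf.Sat]
  | ff => simp [LTLfB.Sat, LTLfB.rev, PLTLf.Sat]
  | atom p =>
    have h : ρ.length - 1 - (ρ.length - 1 - x) = x := by omega
    have h' : ρ.length - 1 - x < ρ.length := by omega
    simp [LTLfB.Sat, LTLfB.rev, PLTLf.Sat, List.getD_eq_getElem?_getD,
      List.getElem?_reverse h', h]
  | not φ ih => simp only [LTLfB.Sat, LTLfB.rev, PLTLf.Sat, ih x hx]
  | and φ₁ φ₂ ih₁ ih₂ => simp only [LTLfB.Sat, LTLfB.rev, PLTLf.Sat, ih₁ x hx, ih₂ x hx]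
  | next φ ih =>
    simp only [LTLfB.Sat, LTLfB.rev, PLTLf.Sat]
    have e : ρ.length - 1 - x - 1 = ρ.length - 1 - (x + 1) := by omega
    rw [e]
    constructor
    · rintro ⟨h, hs⟩
      exact ⟨by omega, (ih _ h).1 hs⟩
    · rintro ⟨h, hs⟩
      have h' : x + 1 < ρ.length := by omega
      exact ⟨h', (ih _ h').2 hs⟩
  | until_ φ₁ φ₂ ih₁ ih₂ =>
    simp only [LTLfB.Sat, LTLfB.rev, PLTLf.Sat]
    constructor
    · rintro ⟨y, hxy, hy, h₂, h₁⟩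
      refine ⟨ρ.length - 1 - y, by omega, (ih₂ y hy).1 h₂, fun z hz hzx => ?_⟩
      have := (ih₁ (ρ.length - 1 - z) (by omega)).1 (h₁ _ (by omega) (by omega))
      rwa [show ρ.length - 1 - (ρ.length - 1 - z) = z by omega] at this
    · rintro ⟨y, hyx, h₂, h₁⟩
      refine ⟨ρ.length - 1 - y, by omega, by omega, (ih₂ _ (by omega)).2 ?_,
        fun z hxz hz => (ih₁ z (by omega)).2 (h₁ _ (by omega) (by omega))⟩
      rwa [show ρ.length - 1 - (ρ.length - 1 - y) = y by omega]
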